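/- arXiv:2411.15680 — 11 statements merged into one kernel-verified Lean document; each statement's English description precedes it below -/
import Mathlib

section
/- Let 𝔽 be an algebraically closed field, n a natural number, and let ρ, σ : F_n → SL₂(𝔽) be group homomorphisms from the free group F_n on generators x₁,…,xₙ. If tr ρ(xᵢ) = tr σ(xᵢ) for all i, tr ρ(xᵢxⱼ) = tr σ(xᵢxⱼ) for all i < j, and tr ρ(xᵢxⱼx_k) = tr σ(xᵢxⱼx_k) for all i < j < k, then tr ρ(γ) = tr σ(γ) for every element γ of F_n. -/
/-!
The trace form `(X, Y) ↦ tr (X * Y)` on `M₂(F)` is nondegenerate in every characteristic, and the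
proof splits according to whether three suitable matrices `A, B, C`, together with `1`, form a basis.
Such a basis is detected by `δ(A, B, C) = tr (A * B * C) - tr (A * C * B) ≠ 0`
(`linearIndependent_of_trace_ne`).

* Suppose `δ(A, B, C) ≠ 0` where either `A, B, C` are images under `ρ` of three generators, or `A, B`
  are images of two generators and `C = A * B`. The traces of all products of three elements of
  `1, A, B, C` agree with those of their counterparts under `σ`, so the Gram matrix and the structure
  constants of the two bases coincide. Hence `X ~ X'`, defined by equality of the pairings of `X`
  and `X'` with the two bases, is a multiplicative relation preserving traces; it contains the pair
  of images of each generator, hence of each `γ` (`trc_eq_of_basis`, `trc_eq_of_ne`). The same works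
  with `ρ` and `σ` exchanged.

* Otherwise all `δ` vanish for both representations. As `det (A * B - B * A) = -δ(A, B, A * B)`, each
  commutator `N = A * B - B * A` of generators is nilpotent, and `tr (N * C) = 0` for every
  generator `C`. If some `N ≠ 0`, its image is a line stable under all generators; if all generators
  commute, an eigenline of a nonscalar one is stable. Thus both representations have a common
  eigenvector (`exists_common_eigenvector`), and their traces are `χ + χ⁻¹` and `ψ + ψ⁻¹` for
  characters `χ, ψ` of the free group. Agreement on generators and on products of two generators
  forces `ψ = χ` or `ψ = χ⁻¹`.
-/

open Matrix MatrixGroups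

/-- The trace of an element of `SL₂(𝔽)`. -/
def trc {F : Type*} [Field F] (M : Matrix.SpecialLinearGroup (Fin 2) F) : F :=
  Matrix.trace (M : Matrix (Fin 2) (Fin 2) F)

/-! ### Trace identities -/

section Identities

variable {F : Type*} [Field F]

local notation "SL2" => Matrix.SpecialLinearGroup (Fin 2) F
local notation "M2" => Matrix (Fin 2) (Fin 2) F

lemma trc_one : trc (1 : SL2) = 2 := by
  simp [trc]

lemma det_entries (A : SL2) : A.1 0 0 * A.1 1 1 - A.1 0 1 * A.1 1 0 = 1 := by
  rw [← Matrix.det_fin_two]; exact A.2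

lemma trc_mul_comm (A B : SL2) : trc (A * B) = trc (B * A) := by
  simp only [trc, Matrix.SpecialLinearGroup.coe_mul]
  exact Matrix.trace_mul_comm _ _

lemma trc_cycle (A B C : SL2) : trc (A * B * C) = trc (B * C * A) := by
  rw [mul_assoc, trc_mul_comm]

lemma trc_sq_mul (A B : SL2) : trc (A * A * B) = trc A * trc (A * B) - trc B := by
  have h := det_entries A
  simp only [trc, Matrix.SpecialLinearGroup.coe_mul, Matrix.trace_fin_two, Matrix.mul_apply,
    Fin.sum_univ_two]
  linear_combination (-(B.1 0 0) - B.1 1 1) * h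

lemma trc_sq (A : SL2) : trc (A * A) = trc A * trc A - 2 := by
  have := trc_sq_mul A 1
  simpa [trc_one] using this

/-- The polarized Cayley–Hamilton identity: reversing the cyclic order of a triple changes its trace
in a way controlled by shorter products. -/
lemma trc_swap (A B C : SL2) : trc (A * C * B) = trc A * trc (B * C) + trc B * trc (A * C) +
    trc C * trc (A * B) - trc A * trc B * trc C - trc (A * B * C) := by
  simp only [trc, Matrix.SpecialLinearGroup.coe_mul, Matrix.trace_fin_two, Matrix.mul_apply,
    Fin.sum_univ_two]
  ring

lemma coe_inv_eq (A : SL2) : ((A⁻¹ : SL2) : M2) = trc A • (1 : M2) - A.1 := by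
  rw [Matrix.SpecialLinearGroup.coe_inv, Matrix.adjugate_fin_two]
  ext i j
  fin_cases i <;> fin_cases j <;> simp [trc, Matrix.trace_fin_two]

section Symmetrize

variable {ι : Type*} [LinearOrder ι] {y y' : ι → Matrix.SpecialLinearGroup (Fin 2) F}

lemma pairs_agree (h1 : ∀ i : ι, trc (y i) = trc (y' i))
    (h2 : ∀ i j : ι, i < j → trc (y i * y j) = trc (y' i * y' j)) (i j : ι) :
    trc (y i * y j) = trc (y' i * y' j) := by
  rcases lt_trichotomy i j with h | rfl | h
  · exact h2 i j h
  · rw [trc_sq, trc_sq, h1]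
  · rw [trc_mul_comm, trc_mul_comm (y' i), h2 j i h]

/-- Agreement of the traces of increasing products of length at most three extends to all products
of length three, in any order and with repetitions. -/
lemma triples_agree (h1 : ∀ i : ι, trc (y i) = trc (y' i))
    (h2 : ∀ i j : ι, i < j → trc (y i * y j) = trc (y' i * y' j))
    (h3 : ∀ i j k : ι, i < j → j < k → trc (y i * y j * y k) = trc (y' i * y' j * y' k))
    (i j k : ι) : trc (y i * y j * y k) = trc (y' i * y' j * y' k) := by
  have hp := pairs_agree h1 h2
  have cyc : ∀ i j k : ι, trc (y i * y j * y k) = trc (y' i * y' j * y' k) →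
      trc (y j * y k * y i) = trc (y' j * y' k * y' i) := by
    intro i j k h
    rwa [← trc_cycle (y i), ← trc_cycle (y' i)]
  have swap : ∀ i j k : ι, trc (y i * y j * y k) = trc (y' i * y' j * y' k) →
      trc (y i * y k * y j) = trc (y' i * y' k * y' j) := by
    intro i j k h
    rw [trc_swap, trc_swap (y' i), h, hp, hp, hp, h1, h1, h1]
  have diag : ∀ i k : ι, trc (y i * y i * y k) = trc (y' i * y' i * y' k) := by
    intro i k
    rw [trc_sq_mul, trc_sq_mul, hp, h1, h1]
  rcases lt_trichotomy i j with hij | rfl | hij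
  · rcases lt_trichotomy j k with hjk | rfl | hjk
    · exact h3 i j k hij hjk
    · exact cyc _ _ _ (cyc _ _ _ (diag j i))
    · rcases lt_trichotomy i k with hik | rfl | hik
      · exact swap _ _ _ (h3 i k j hik hjk)
      · exact cyc _ _ _ (cyc _ _ _ (cyc _ _ _ (swap _ _ _ (diag i j))))
      · exact cyc _ _ _ (h3 k i j hik hij)
  · exact diag i k
  · rcases lt_trichotomy i k with hik | rfl | hik
    · exact cyc _ _ _ (cyc _ _ _ (swap _ _ _ (h3 j i k hij hik)))
    · exact swap _ _ _ (diag i j)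
    · rcases lt_trichotomy j k with hjk | rfl | hjk
      · exact cyc _ _ _ (cyc _ _ _ (h3 j k i hjk hik))
      · exact cyc _ _ _ (cyc _ _ _ (diag j i))
      · exact cyc _ _ _ (swap _ _ _ (h3 k j i hjk hij))

end Symmetrize

/-! ### Bases of the matrix algebra with equal structure constants -/

/-- Pairing a linear relation among `1, A, B, C` with the commutators of `A, B, C` under the trace
form isolates its coefficients up to the factor `tr (A * B * C) - tr (A * C * B)`. -/
lemma linearIndependent_of_trace_ne (A B C : SL2) (h : trc (A * B * C) ≠ trc (A * C * B)) :
    LinearIndependent F ![(1 : M2), A.1, B.1, C.1] := by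
  rw [Fintype.linearIndependent_iff]
  intro c hc
  simp only [Fin.sum_univ_four] at hc
  have e00 := congrFun (congrFun hc 0) 0
  have e01 := congrFun (congrFun hc 0) 1
  have e10 := congrFun (congrFun hc 1) 0
  have e11 := congrFun (congrFun hc 1) 1
  simp at e00 e01 e10 e11
  have hδ := sub_ne_zero.2 h
  simp only [trc, Matrix.SpecialLinearGroup.coe_mul, Matrix.trace_fin_two, Matrix.mul_apply,
    Fin.sum_univ_two] at hδ
  generalize A.1 = A at *
  generalize B.1 = B at *
  generalize C.1 = C at *
  have key : ∀ X Y : M2, (X * Y - Y * X) 0 0 * (c 0 + c 1 * A 0 0 + c 2 * B 0 0 + c 3 * C 0 0)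
      + (X * Y - Y * X) 0 1 * (c 1 * A 1 0 + c 2 * B 1 0 + c 3 * C 1 0)
      + (X * Y - Y * X) 1 0 * (c 1 * A 0 1 + c 2 * B 0 1 + c 3 * C 0 1)
      + (X * Y - Y * X) 1 1 * (c 0 + c 1 * A 1 1 + c 2 * B 1 1 + c 3 * C 1 1) = 0 := by
    intro X Y
    rw [e00, e01, e10, e11]; ring
  have k1 := key B C
  have k2 := key C A
  have k3 := key A B
  simp only [Matrix.sub_apply, Matrix.mul_apply, Fin.sum_univ_two] at k1 k2 k3
  have c1 : c 1 = 0 := by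
    refine (mul_eq_zero.1 ?_).resolve_right hδ
    linear_combination k1
  have c2 : c 2 = 0 := by
    refine (mul_eq_zero.1 ?_).resolve_right hδ
    linear_combination k2
  have c3 : c 3 = 0 := by
    refine (mul_eq_zero.1 ?_).resolve_right hδ
    linear_combination k3
  have c0 : c 0 = 0 := by simpa [c1, c2, c3] using e00
  intro i
  fin_cases i <;> assumption

lemma exists_coeff {e : Fin 4 → M2} (he : LinearIndependent F e) (X : M2) :
    ∃ c : Fin 4 → F, X = ∑ i, c i • e i := by
  have hs : ⊤ ≤ Submodule.span F (Set.range e) :=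
    (he.span_eq_top_of_card_eq_finrank' (by simp [Module.finrank_matrix])).ge
  obtain ⟨c, hc⟩ := (Submodule.mem_span_range_iff_exists_fun F).1 (hs (Submodule.mem_top (x := X)))
  exact ⟨c, hc.symm⟩

lemma eq_of_trace_mul_basis {e : Fin 4 → M2} (he : LinearIndependent F e) {X Y : M2}
    (h : ∀ j, (X * e j).trace = (Y * e j).trace) : X = Y := by
  refine Matrix.ext_iff_trace_mul_right.2 fun Z => ?_
  obtain ⟨c, rfl⟩ := exists_coeff he Z
  simp [Finset.mul_sum, Matrix.trace_sum, h]

/-- Families `e`, `e'` with the same traces of triple products (and containing `1`) have the same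
Gram matrix and structure constants, so two representations whose generators pair equally with `e`
and with `e'` have equal traces as soon as `e` is a basis. -/
lemma trc_eq_of_basis {n : ℕ} (ρ σ : FreeGroup (Fin n) →* SL2) {e e' : Fin 4 → M2}
    (he : LinearIndependent F e) (e0 : e 0 = 1) (e0' : e' 0 = 1)
    (ht : ∀ i j k, (e i * e j * e k).trace = (e' i * e' j * e' k).trace)
    (hg : ∀ g j, ((ρ (FreeGroup.of g)).1 * e j).trace = ((σ (FreeGroup.of g)).1 * e' j).trace)
    (γ : FreeGroup (Fin n)) : trc (ρ γ) = trc (σ γ) := by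
  have hp : ∀ i j, (e i * e j).trace = (e' i * e' j).trace := by
    intro i j
    simpa [e0, e0'] using ht i j 0
  have he' : LinearIndependent F e' := by
    refine Fintype.linearIndependent_iff.2 fun c hc => ?_
    refine Fintype.linearIndependent_iff.1 he c (eq_of_trace_mul_basis he fun j => ?_)
    have := congrArg (fun X => (X * e' j).trace) hc
    simpa [Finset.sum_mul, Matrix.trace_sum, hp] using this
  have hc : ∀ X X' : M2, (∀ j, (X * e j).trace = (X' * e' j).trace) →
      ∃ c : Fin 4 → F, X = ∑ i, c i • e i ∧ X' = ∑ i, c i • e' i := by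
    intro X X' h
    obtain ⟨c, rfl⟩ := exists_coeff he X
    refine ⟨c, rfl, eq_of_trace_mul_basis he' fun j => ?_⟩
    rw [← h j]
    simp [Finset.sum_mul, Matrix.trace_sum, hp]
  have hmul : ∀ X X' Y Y' : M2, (∀ j, (X * e j).trace = (X' * e' j).trace) →
      (∀ j, (Y * e j).trace = (Y' * e' j).trace) →
      ∀ j, (X * Y * e j).trace = (X' * Y' * e' j).trace := by
    intro X X' Y Y' hX hY j
    obtain ⟨c, rfl, rfl⟩ := hc X X' hX
    obtain ⟨d, rfl, rfl⟩ := hc Y Y' hY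
    simp [Finset.sum_mul, Finset.mul_sum, Matrix.trace_sum, ht]
  have h1 : ∀ j, ((1 : M2) * e j).trace = ((1 : M2) * e' j).trace := by
    intro j
    simpa [e0, e0'] using hp 0 j
  have main : ∀ j, ((ρ γ).1 * e j).trace = ((σ γ).1 * e' j).trace := by
    induction γ using FreeGroup.induction_on with
    | C1 => simpa using h1
    | of g => exact hg g
    | inv_of g h =>
      intro j
      have ht : trc (ρ (FreeGroup.of g)) = trc (σ (FreeGroup.of g)) := by
        simpa [trc, e0, e0'] using hg g 0
      rw [map_inv, map_inv, coe_inv_eq, coe_inv_eq, ht, sub_mul, sub_mul, Matrix.trace_sub,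
        Matrix.trace_sub, hg g j, smul_mul_assoc, smul_mul_assoc, Matrix.trace_smul,
        Matrix.trace_smul, h1 j]
    | mul a b ha hb =>
      rw [map_mul, map_mul, Matrix.SpecialLinearGroup.coe_mul, Matrix.SpecialLinearGroup.coe_mul]
      exact hmul _ _ _ _ ha hb
  simpa [trc, e0, e0'] using main 0

lemma trc_eq_of_ne {n : ℕ} (ρ σ : FreeGroup (Fin n) →* SL2) (A B C A' B' C' : SL2)
    (hne : trc (A * B * C) ≠ trc (A * C * B))
    (hA : trc A = trc A') (hB : trc B = trc B') (hC : trc C = trc C')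
    (hAB : trc (A * B) = trc (A' * B')) (hAC : trc (A * C) = trc (A' * C'))
    (hBC : trc (B * C) = trc (B' * C')) (hABC : trc (A * B * C) = trc (A' * B' * C'))
    (g1 : ∀ g, trc (ρ (FreeGroup.of g)) = trc (σ (FreeGroup.of g)))
    (gA : ∀ g, trc (ρ (FreeGroup.of g) * A) = trc (σ (FreeGroup.of g) * A'))
    (gB : ∀ g, trc (ρ (FreeGroup.of g) * B) = trc (σ (FreeGroup.of g) * B'))
    (gC : ∀ g, trc (ρ (FreeGroup.of g) * C) = trc (σ (FreeGroup.of g) * C'))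
    (γ : FreeGroup (Fin n)) : trc (ρ γ) = trc (σ γ) := by
  have hfam : ∀ A B C : SL2, (fun i => (![1, A, B, C] i : SL2).1) = ![(1 : M2), A.1, B.1, C.1] := by
    intro A B C
    ext i : 1
    fin_cases i <;> simp
  have ht := triples_agree (y := ![1, A, B, C]) (y' := ![1, A', B', C'])
    (by intro i; fin_cases i <;> simp [*])
    (by intro i j hij; fin_cases i <;> fin_cases j <;> simp at hij <;> simp [*])
    (by
      intro i j k hij hjk
      fin_cases i <;> fin_cases j <;> simp at hij <;> fin_cases k <;> simp at hjk <;> simp [*])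
  refine trc_eq_of_basis ρ σ (e := fun i => (![1, A, B, C] i : SL2).1)
    (e' := fun i => (![1, A', B', C'] i : SL2).1) ?_ rfl rfl ht ?_ γ
  · rw [hfam]
    exact linearIndependent_of_trace_ne A B C hne
  · intro g j
    fin_cases j
    · simpa [trc] using g1 g
    · simpa [trc] using gA g
    · simpa [trc] using gB g
    · simpa [trc] using gC g

/-! ### Common eigenvectors in the degenerate case -/

/-- Two vectors in the kernel of a nonzero `2 × 2` matrix are proportional. -/
lemma exists_smul_of_ker {N : M2} (hN : N ≠ 0) {v w : Fin 2 → F} (hv : v ≠ 0)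
    (h1 : N *ᵥ v = 0) (h2 : N *ᵥ w = 0) : ∃ a : F, w = a • v := by
  have hd : v 0 * w 1 = v 1 * w 0 := by
    by_contra hne
    have hne := sub_ne_zero.2 hne
    apply hN
    ext i j
    have a1 := congrFun h1 i
    have a2 := congrFun h2 i
    simp [Matrix.mulVec, dotProduct, Fin.sum_univ_two] at a1 a2
    refine (mul_eq_zero.1 (?_ : N i j * _ = 0)).resolve_right hne
    fin_cases j
    · change N i 0 * _ = 0
      linear_combination w 1 * a1 - v 1 * a2
    · change N i 1 * _ = 0
      linear_combination v 0 * a2 - w 0 * a1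
  by_cases h0 : v 0 = 0
  · have hv1 : v 1 ≠ 0 := by
      intro h
      apply hv
      ext i; fin_cases i <;> assumption
    refine ⟨w 1 / v 1, ?_⟩
    ext i; fin_cases i
    · simp [h0] at hd ⊢
      tauto
    · simp [hv1]
  · refine ⟨w 0 / v 0, ?_⟩
    ext i; fin_cases i
    · simp [h0]
    · simp
      field_simp
      linear_combination hd

/-- The hypothesis `hd` says that the commutator of `A i` and `A j` has determinant zero. -/
lemma exists_common_eigenvector [IsAlgClosed F] {ι : Type*} (A : ι → SL2)
    (ht : ∀ i j k, trc (A i * A j * A k) = trc (A i * A k * A j))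
    (hd : ∀ i j, trc (A i * A j * (A i * A j)) = trc (A i * (A i * A j) * A j)) :
    ∃ v : Fin 2 → F, v ≠ 0 ∧ ∀ k, ∃ a : F, (A k).1 *ᵥ v = a • v := by
  by_cases hcomm : ∀ i j, (A i).1 * (A j).1 = (A j).1 * (A i).1
  · by_cases hsc : ∃ i, ∀ a : F, (A i).1 - a • (1 : M2) ≠ 0
    · obtain ⟨i, hi⟩ := hsc
      obtain ⟨a, ha⟩ := Module.End.exists_eigenvalue (Matrix.toLin' (A i).1)
      obtain ⟨v, hv⟩ := ha.exists_hasEigenvector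
      have hv' : (A i).1 *ᵥ v = a • v := by simpa using hv.apply_eq_smul
      refine ⟨v, hv.2, fun k => ?_⟩
      refine exists_smul_of_ker (hi a) hv.2 ?_ ?_
      · simp [Matrix.sub_mulVec, Matrix.smul_mulVec, hv']
      · rw [Matrix.sub_mulVec, Matrix.mulVec_mulVec, hcomm, ← Matrix.mulVec_mulVec, hv']
        simp [Matrix.smul_mulVec, Matrix.mulVec_smul]
    · push Not at hsc
      refine ⟨![1, 0], by simp, fun k => ?_⟩
      obtain ⟨a, ha⟩ := hsc k
      refine ⟨a, ?_⟩
      rw [sub_eq_zero.1 ha]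
      simp [Matrix.smul_mulVec]
  · push Not at hcomm
    obtain ⟨i, j, hij⟩ := hcomm
    obtain ⟨N, hNdef⟩ : ∃ N, N = (A i).1 * (A j).1 - (A j).1 * (A i).1 := ⟨_, rfl⟩
    have hN : N ≠ 0 := hNdef ▸ sub_ne_zero.2 hij
    have htr : N 0 0 + N 1 1 = 0 := by
      rw [hNdef]; simp [Matrix.mul_apply, Fin.sum_univ_two]; ring
    have hdet : N 0 0 * N 1 1 - N 0 1 * N 1 0 = 0 := by
      have := hd i j
      simp only [trc, Matrix.SpecialLinearGroup.coe_mul, Matrix.trace_fin_two, Matrix.mul_apply,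
        Fin.sum_univ_two] at this
      rw [hNdef]
      simp only [Matrix.sub_apply, Matrix.mul_apply, Fin.sum_univ_two]
      linear_combination -this
    have htN : ∀ k, N 0 0 * (A k).1 0 0 + N 0 1 * (A k).1 1 0 + N 1 0 * (A k).1 0 1
        + N 1 1 * (A k).1 1 1 = 0 := by
      intro k
      have := ht k i j
      simp only [trc, Matrix.SpecialLinearGroup.coe_mul, Matrix.trace_fin_two, Matrix.mul_apply,
        Fin.sum_univ_two] at this
      rw [hNdef]
      simp only [Matrix.sub_apply, Matrix.mul_apply, Fin.sum_univ_two]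
      linear_combination this
    have hcol : ∃ c, N.col c ≠ 0 := by
      by_contra! h
      exact hN (by ext r c; exact congrFun (h c) r)
    obtain ⟨c, hc⟩ := hcol
    have hNN : N * N = 0 := by
      ext r s
      fin_cases r <;> fin_cases s <;> simp [Matrix.mul_apply, Fin.sum_univ_two]
      · linear_combination N 0 0 * htr - hdet
      · linear_combination N 0 1 * htr
      · linear_combination N 1 0 * htr
      · linear_combination N 1 1 * htr - hdet
    -- A matrix of rank one satisfies `N * X * N = tr (N * X) • N`.
    have hNAN : ∀ k, N * (A k).1 * N = 0 := by
      intro k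
      ext r s
      have h := htN k
      fin_cases r <;> fin_cases s <;> simp [Matrix.mul_apply, Fin.sum_univ_two]
      · linear_combination N 0 0 * h - (A k).1 1 1 * hdet
      · linear_combination N 0 1 * h + (A k).1 0 1 * hdet
      · linear_combination N 1 0 * h + (A k).1 1 0 * hdet
      · linear_combination N 1 1 * h - (A k).1 0 0 * hdet
    have hcoleq : N.col c = N *ᵥ Pi.single c 1 := by simp
    refine ⟨N.col c, hc, fun k => exists_smul_of_ker hN hc ?_ ?_⟩
    · rw [hcoleq, Matrix.mulVec_mulVec, hNN, Matrix.zero_mulVec]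
    · rw [hcoleq, Matrix.mulVec_mulVec, Matrix.mulVec_mulVec, hNAN, Matrix.zero_mulVec]

/-! ### Characters -/

/-- A representation with a common eigenvector has trace `χ + χ⁻¹` for a character `χ`. -/
lemma exists_character {n : ℕ} (ρ : FreeGroup (Fin n) →* SL2) {v : Fin 2 → F} (hv : v ≠ 0)
    (h : ∀ k, ∃ a : F, (ρ (FreeGroup.of k)).1 *ᵥ v = a • v) :
    ∃ χ : FreeGroup (Fin n) →* Fˣ, ∀ γ, trc (ρ γ) = (χ γ : F) + ((χ γ)⁻¹ : Fˣ) := by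
  have hinv : ∀ (M : SL2) (w : Fin 2 → F), (M⁻¹).1 *ᵥ (M.1 *ᵥ w) = w := by
    intro M w
    rw [Matrix.mulVec_mulVec, ← Matrix.SpecialLinearGroup.coe_mul]
    simp
  choose a ha using h
  have ha0 : ∀ k, a k ≠ 0 := by
    intro k h0
    have := hinv (ρ (FreeGroup.of k)) v
    rw [ha, h0] at this
    simp at this
    exact hv this.symm
  let χ : FreeGroup (Fin n) →* Fˣ := FreeGroup.lift fun k => Units.mk0 (a k) (ha0 k)
  have hχ : ∀ γ, (ρ γ).1 *ᵥ v = (χ γ : F) • v := by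
    intro γ
    induction γ using FreeGroup.induction_on with
    | C1 => simp
    | of g => simpa [χ] using ha g
    | inv_of g hg =>
      have := hinv (ρ (FreeGroup.of g)) v
      rw [hg, Matrix.mulVec_smul] at this
      rw [map_inv, map_inv]
      calc _ = ((χ (.of g))⁻¹ : Fˣ).1 • ((χ (.of g)).1 • ((ρ (.of g))⁻¹).1 *ᵥ v) := by
            rw [smul_smul, Units.inv_mul, one_smul]
        _ = _ := by rw [this]
    | mul x y hx hy =>
      rw [map_mul, map_mul, Matrix.SpecialLinearGroup.coe_mul, ← Matrix.mulVec_mulVec, hy,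
        Matrix.mulVec_smul, hx, smul_smul, Units.val_mul, mul_comm]
  refine ⟨χ, fun γ => ?_⟩
  have hdet : ((ρ γ).1 - (χ γ : F) • (1 : M2)).det = 0 := by
    refine Matrix.exists_mulVec_eq_zero_iff.1 ⟨v, hv, ?_⟩
    simp [Matrix.sub_mulVec, Matrix.smul_mulVec, hχ]
  have h1 := det_entries (ρ γ)
  rw [Matrix.det_fin_two] at hdet
  simp at hdet
  simp only [trc, Matrix.trace_fin_two]
  have h0 : (χ γ : F) ≠ 0 := (χ γ).ne_zero
  rw [Units.val_inv_eq_inv_val]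
  field_simp
  linear_combination h1 - hdet

lemma eq_or_eq_inv_of_add_inv {a b : F} (ha : a ≠ 0) (hb : b ≠ 0)
    (h : a + a⁻¹ = b + b⁻¹) : a = b ∨ a = b⁻¹ := by
  field_simp at h
  have : (a - b) * (a * b - 1) = 0 := by linear_combination h
  rcases mul_eq_zero.1 this with h | h
  · exact Or.inl (sub_eq_zero.1 h)
  · exact Or.inr (eq_inv_of_mul_eq_one_left (sub_eq_zero.1 h))

/-- Characters of a free group are determined up to inversion by the values of `χ + χ⁻¹` on
generators and on products of two generators. -/
lemma character_eq_or_eq_inv {n : ℕ} (χ ψ : FreeGroup (Fin n) →* Fˣ)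
    (h1 : ∀ i, (χ (.of i) : F) + ((χ (.of i))⁻¹ : Fˣ) = ψ (.of i) + ((ψ (.of i))⁻¹ : Fˣ))
    (h2 : ∀ i j, (χ (.of i * .of j) : F) + ((χ (.of i * .of j))⁻¹ : Fˣ) =
      ψ (.of i * .of j) + ((ψ (.of i * .of j))⁻¹ : Fˣ)) :
    χ = ψ ∨ χ = ψ⁻¹ := by
  have hor : ∀ i, χ (.of i) = ψ (.of i) ∨ χ (.of i) = (ψ (.of i))⁻¹ := by
    intro i
    have := h1 i
    simp only [Units.val_inv_eq_inv_val] at this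
    rcases eq_or_eq_inv_of_add_inv (Units.ne_zero _) (Units.ne_zero _) this with h | h
    · exact Or.inl (Units.ext h)
    · exact Or.inr (Units.ext (by simpa using h))
  by_contra! hcon
  obtain ⟨hne, hne'⟩ := hcon
  have hi : ∃ i, χ (.of i) ≠ ψ (.of i) := by
    by_contra! h
    exact hne (FreeGroup.ext_hom _ _ h)
  have hj : ∃ j, χ (.of j) ≠ (ψ (.of j))⁻¹ := by
    by_contra! h
    exact hne' (FreeGroup.ext_hom _ _ h)
  obtain ⟨i, hi⟩ := hi
  obtain ⟨j, hj⟩ := hj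
  have hi' := (hor i).resolve_left hi
  have hj' := (hor j).resolve_right hj
  -- Here `χ` and `ψ` agree at `j` and are inverse at `i`, so `h2` reads `(x² - 1) * (y² - 1) = 0`.
  have h := h2 i j
  simp only [map_mul, hi', hj'] at h hi hj
  generalize ψ (.of i) = x at h hi
  generalize ψ (.of j) = y at h hj
  have hx0 := x.ne_zero
  have hy0 := y.ne_zero
  simp only [mul_inv, inv_inv, Units.val_mul, Units.val_inv_eq_inv_val] at h
  field_simp at h
  have hprod : ((x : F) * x - 1) * ((y : F) * y - 1) = 0 := by linear_combination -h
  rcases mul_eq_zero.1 hprod with h | h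
  · exact hi (inv_eq_of_mul_eq_one_left (Units.ext (by simpa using sub_eq_zero.1 h)))
  · exact hj (eq_inv_of_mul_eq_one_left (Units.ext (by simpa using sub_eq_zero.1 h)))

/-! ### The dichotomy -/

/-- Either the traces agree, or all products of generators that detect a basis of `M₂(F)` under `ρ`
(with `C` a generator, or `C = A * B`) have vanishing `tr (A * B * C) - tr (A * C * B)`. -/
lemma trc_eq_or_degenerate {n : ℕ} (ρ σ : FreeGroup (Fin n) →* SL2)
    (h1 : ∀ i, trc (ρ (.of i)) = trc (σ (.of i)))
    (h2 : ∀ i j, trc (ρ (.of i) * ρ (.of j)) = trc (σ (.of i) * σ (.of j)))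
    (h3 : ∀ i j k, trc (ρ (.of i) * ρ (.of j) * ρ (.of k)) =
      trc (σ (.of i) * σ (.of j) * σ (.of k))) :
    (∀ γ, trc (ρ γ) = trc (σ γ)) ∨
    ((∀ i j k, trc (ρ (.of i) * ρ (.of j) * ρ (.of k)) =
      trc (ρ (.of i) * ρ (.of k) * ρ (.of j))) ∧
     (∀ i j, trc (ρ (.of i) * ρ (.of j) * (ρ (.of i) * ρ (.of j))) =
      trc (ρ (.of i) * (ρ (.of i) * ρ (.of j)) * ρ (.of j)))) := by
  by_contra! hcon
  obtain ⟨⟨γ, hγ⟩, hdeg⟩ := hcon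
  refine absurd (hdeg fun i j k => ?_) ?_
  · by_contra hne
    exact hγ (trc_eq_of_ne ρ σ _ _ _ _ _ _ hne (h1 i) (h1 j) (h1 k) (h2 i j) (h2 i k) (h2 j k)
      (h3 i j k) h1 (fun g => h2 g i) (fun g => h2 g j) (fun g => h2 g k) γ)
  · push Not
    intro i j
    by_contra hne
    refine hγ (trc_eq_of_ne ρ σ _ _ _ (σ (.of i)) (σ (.of j)) (σ (.of i) * σ (.of j)) hne
      (h1 i) (h1 j) (h2 i j) (h2 i j) ?_ ?_ ?_ h1 (fun g => h2 g i) (fun g => h2 g j) ?_ γ)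
    · simpa only [mul_assoc] using h3 i i j
    · simpa only [mul_assoc] using h3 j i j
    · rw [trc_sq, trc_sq, h2]
    · intro g
      simpa only [mul_assoc] using h3 g i j

end Identities

theorem trace_eq_of_agree_on_products
    {F : Type*} [Field F] [IsAlgClosed F] (n : ℕ)
    (ρ σ : FreeGroup (Fin n) →* Matrix.SpecialLinearGroup (Fin 2) F)
    (h1 : ∀ i : Fin n, trc (ρ (FreeGroup.of i)) = trc (σ (FreeGroup.of i)))
    (h2 : ∀ i j : Fin n, i < j →
      trc (ρ (FreeGroup.of i * FreeGroup.of j)) =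
        trc (σ (FreeGroup.of i * FreeGroup.of j)))
    (h3 : ∀ i j k : Fin n, i < j → j < k →
      trc (ρ (FreeGroup.of i * FreeGroup.of j * FreeGroup.of k)) =
        trc (σ (FreeGroup.of i * FreeGroup.of j * FreeGroup.of k))) :
    ∀ γ : FreeGroup (Fin n), trc (ρ γ) = trc (σ γ) := by
  simp only [map_mul] at h2 h3
  have p2 := pairs_agree (y := fun i => ρ (.of i)) (y' := fun i => σ (.of i)) h1 h2
  have p3 := triples_agree (y := fun i => ρ (.of i)) (y' := fun i => σ (.of i)) h1 h2 h3
  rcases trc_eq_or_degenerate ρ σ h1 p2 p3 with h | ⟨ht, hd⟩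
  · exact h
  rcases trc_eq_or_degenerate σ ρ (fun i => (h1 i).symm) (fun i j => (p2 i j).symm)
    (fun i j k => (p3 i j k).symm) with h | ⟨ht', hd'⟩
  · exact fun γ => (h γ).symm
  obtain ⟨v, hv, hρ⟩ := exists_common_eigenvector (fun i => ρ (.of i)) ht hd
  obtain ⟨w, hw, hσ⟩ := exists_common_eigenvector (fun i => σ (.of i)) ht' hd'
  obtain ⟨χ, hχ⟩ := exists_character ρ hv hρ
  obtain ⟨ψ, hψ⟩ := exists_character σ hw hσ
  intro γ
  have := character_eq_or_eq_inv χ ψ (fun i => by rw [← hχ, ← hψ, h1])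
    (fun i j => by rw [← hχ, ← hψ, map_mul, map_mul]; exact p2 i j)
  rw [hχ, hψ]
  rcases this with rfl | rfl
  · rfl
  · simp [add_comm]
end

section
/- Let 𝕂 be a field and let A, B ∈ SL₂(𝕂) satisfy the Klein bottle relation A·B·A⁻¹·B = E. If B ≠ E and B ≠ -E, then either A·B = B·A, or A² = E, or A² = -E. -/
/-!
The relation says that conjugation by `A` inverts `B`, so `A * A` commutes with `B`. By
Cayley–Hamilton, `A * A = tr A • A - 1` in `SL₂`. If `tr A = 0` this gives `A * A = -1`; otherwise
`A` is a polynomial in `A * A`, hence commutes with `B` as well.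
-/

open Matrix MatrixGroups

/-- Cayley–Hamilton for a 2×2 matrix of determinant one. -/
lemma sl2_mul_self {K : Type*} [Field K] (A : Matrix.SpecialLinearGroup (Fin 2) K) :
    (A : Matrix (Fin 2) (Fin 2) K) * (A : Matrix (Fin 2) (Fin 2) K) =
      (A : Matrix (Fin 2) (Fin 2) K).trace • (A : Matrix (Fin 2) (Fin 2) K) - 1 := by
  have hdet := A.det_coe
  rw [Matrix.det_fin_two] at hdet
  ext i j
  fin_cases i <;> fin_cases j <;>
    simp [Matrix.mul_apply, Fin.sum_univ_two, Matrix.trace_fin_two] <;>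
    first | ring1 | linear_combination (-1 : K) * hdet

lemma mul_self_commute_of_klein {G : Type*} [Group G] {a b : G} (h : a * b * a⁻¹ * b = 1) :
    (a * a) * b = b * (a * a) := by
  have h1 : a * b * a⁻¹ = b⁻¹ := eq_inv_of_mul_eq_one_left h
  have h2 : a * b⁻¹ * a⁻¹ = b := by
    rw [← conj_inv, h1, inv_inv]
  calc (a * a) * b = (a * (a * b * a⁻¹) * a⁻¹) * (a * a) := by group
    _ = b * (a * a) := by rw [h1, h2]

theorem klein_bottle_rep_dichotomy
    {K : Type*} [Field K]
    (A B : Matrix.SpecialLinearGroup (Fin 2) K)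
    (hrel : A * B * A⁻¹ * B = 1)
    (hB1 : (B : Matrix (Fin 2) (Fin 2) K) ≠ 1)
    (hB2 : (B : Matrix (Fin 2) (Fin 2) K) ≠ -1) :
    A * B = B * A ∨
      ((A * A : Matrix.SpecialLinearGroup (Fin 2) K) : Matrix (Fin 2) (Fin 2) K) = 1 ∨
      ((A * A : Matrix.SpecialLinearGroup (Fin 2) K) : Matrix (Fin 2) (Fin 2) K) = -1 := by
  have hsq := sl2_mul_self A
  by_cases ht : (A : Matrix (Fin 2) (Fin 2) K).trace = 0
  · right; right
    rw [Matrix.SpecialLinearGroup.coe_mul, hsq, ht, zero_smul, zero_sub]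
  · left
    have hc := congrArg (fun M : Matrix.SpecialLinearGroup (Fin 2) K =>
      (M : Matrix (Fin 2) (Fin 2) K)) (mul_self_commute_of_klein hrel)
    simp only [Matrix.SpecialLinearGroup.coe_mul] at hc
    rw [hsq, sub_mul, mul_sub, one_mul, mul_one, smul_mul_assoc, mul_smul_comm] at hc
    apply Subtype.ext
    simp only [Matrix.SpecialLinearGroup.coe_mul]
    exact smul_right_injective _ ht (sub_left_injective hc)
end

section
/- For every field 𝕂 there is no injective group homomorphism from the Klein bottle group Γ_K = ⟨a, b ∣ a b a⁻¹ b = 1⟩ (realized as the presented group on two generators with single relator a·b·a⁻¹·b) into SL₂(𝕂). -/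
/-!
In `SL₂` the Cayley-Hamilton theorem gives `A² = tr(A) • A - 1`. The Klein bottle relation forces
`A²` to commute with `B`, hence `tr(A) • (AB - BA) = 0`. Either `AB = BA`, or `tr(A) = 0` and then
`A² = -1`, so `A⁴ = 1` (`SL2_commute_or_pow_four_eq_one`). In the Klein bottle group, however,
`ab ≠ ba`, as seen in the quotient `S₃` (`klein_not_commute`), and `a⁴ ≠ 1`, as seen in the quotient
`ℤ` (`klein_pow_four_ne_one`). The argument is uniform in the characteristic of the field.
-/

open Matrix MatrixGroups

/-- The single relator `a·b·a⁻¹·b` of the Klein bottle group, in the free group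
on two generators (`0 = a`, `1 = b`). -/
def kleinRels : Set (FreeGroup (Fin 2)) :=
  {FreeGroup.of 0 * FreeGroup.of 1 * (FreeGroup.of 0)⁻¹ * FreeGroup.of 1}

/-- The Klein bottle group `Γ_K = ⟨a, b ∣ a b a⁻¹ b = 1⟩`. -/
abbrev KleinBottleGroup := PresentedGroup kleinRels

/-- The homomorphism `a ↦ (0 1)`, `b ↦ (0 1 2)` to `S₃` separates `ab` from `ba`. -/
theorem klein_not_commute :
    (PresentedGroup.of 0 * PresentedGroup.of 1 : KleinBottleGroup) ≠
      PresentedGroup.of 1 * PresentedGroup.of 0 := by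
  intro h
  let f : Fin 2 → Equiv.Perm (Fin 3) := ![Equiv.swap 0 1, finRotate 3]
  have hf : ∀ r ∈ kleinRels, FreeGroup.lift f r = 1 := by
    rintro r rfl
    simp only [map_mul, map_inv, FreeGroup.lift_apply_of]
    decide
  have h' := congrArg (PresentedGroup.toGroup hf) h
  simp only [map_mul, PresentedGroup.toGroup.of] at h'
  revert h'
  decide

/-- The homomorphism `a ↦ 1`, `b ↦ 0` to `ℤ` shows that `a` has infinite order; only `a⁴ ≠ 1` is
recorded. -/
theorem klein_pow_four_ne_one : (PresentedGroup.of 0 : KleinBottleGroup) ^ 4 ≠ 1 := by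
  intro h
  let f : Fin 2 → Multiplicative ℤ := ![Multiplicative.ofAdd 1, 1]
  have hf : ∀ r ∈ kleinRels, FreeGroup.lift f r = 1 := by
    rintro r rfl
    simp [f]
  have h' := congrArg (PresentedGroup.toGroup hf) h
  simp only [map_pow, map_one, PresentedGroup.toGroup.of] at h'
  revert h'
  decide

theorem SL2_commute_or_pow_four_eq_one {K : Type*} [Field K]
    (A B : Matrix.SpecialLinearGroup (Fin 2) K) (h : A * B * A⁻¹ * B = 1) :
    A * B = B * A ∨ A ^ 4 = 1 := by
  -- Conjugation by `A` inverts `B`, so conjugation by `A ^ 2` fixes it.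
  have hconj : SemiconjBy A B B⁻¹ := mul_inv_eq_iff_eq_mul.mp (eq_inv_of_mul_eq_one_left h)
  have hcomm : A ^ 2 * B = B * A ^ 2 := by
    have h2 : SemiconjBy A B⁻¹ B := by simpa using hconj.inv_right
    simpa only [sq] using (h2.mul_left hconj).eq
  have hCH : (A : Matrix (Fin 2) (Fin 2) K) ^ 2 = A.1.trace • A.1 - 1 := by
    have hd := A.1.det_fin_two
    rw [A.2] at hd
    ext i j
    fin_cases i <;> fin_cases j <;>
      simp [sq, Matrix.mul_apply, Fin.sum_univ_two, Matrix.trace_fin_two] <;>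
      first | linear_combination hd | ring
  have hcomm' : A.1 ^ 2 * B.1 = B.1 * A.1 ^ 2 := by
    simpa using congrArg Subtype.val hcomm
  by_cases ht : A.1.trace = 0
  · right
    rw [ht, zero_smul, zero_sub] at hCH
    apply Subtype.ext
    rw [Matrix.SpecialLinearGroup.coe_pow, Matrix.SpecialLinearGroup.coe_one,
      show 4 = 2 * 2 from rfl, pow_mul, hCH, neg_one_sq]
  · left
    rw [hCH, sub_mul, mul_sub, one_mul, mul_one, sub_left_inj, smul_mul_assoc,
      mul_smul_comm] at hcomm'
    apply Subtype.ext
    simpa using smul_right_injective _ ht hcomm'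

theorem klein_bottle_group_no_faithful_SL2_rep
    (K : Type*) [Field K] :
    ¬ ∃ φ : KleinBottleGroup →* Matrix.SpecialLinearGroup (Fin 2) K,
        Function.Injective φ := by
  rintro ⟨φ, hφ⟩
  have hrel : (PresentedGroup.of 0 * PresentedGroup.of 1 * (PresentedGroup.of 0)⁻¹ *
      PresentedGroup.of 1 : KleinBottleGroup) = 1 :=
    PresentedGroup.one_of_mem (rels := kleinRels) rfl
  have hφrel := congrArg φ hrel
  simp only [map_mul, map_inv, map_one] at hφrel
  rcases SL2_commute_or_pow_four_eq_one _ _ hφrel with h | h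
  · exact klein_not_commute (hφ (by simpa only [map_mul] using h))
  · exact klein_pow_four_ne_one (hφ (by simpa only [map_pow, map_one] using h))
end

section
/- Let 𝔽 be an algebraically closed field and let A, B ∈ SL₂(𝔽) satisfy A·B·A⁻¹·B = E. If the pair (A,B) is irreducible (has no common eigenvector), then there exist an invertible 2×2 matrix P over 𝔽 and a nonzero y ∈ 𝔽 such that P·A·P⁻¹ = [[0,-1],[1,0]] and P·B·P⁻¹ = [[y,0],[0,y⁻¹]]. -/
/-!
The relation says `B A B = A`, i.e. `A` conjugates `B` to `B⁻¹`. Take an eigenvector `v` of `B`, with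
eigenvalue `y`, and put `w = A v`. Then `B w = y⁻¹ w`, and irreducibility makes `(v, w)` a basis.
By Cayley–Hamilton `A w = t w - v` with `t = tr A`, while the relation, applied to `w`, gives
`B (A w) = y A w`; comparing the two yields `t (y⁻¹ - y) = 0`. If `y = y⁻¹`, then `B` is scalar and
any eigenvector of `A` is a common one, which is excluded. Hence `t = 0`, and in the basis `(v, w)`
the two matrices have the stated form.
-/

open Matrix MatrixGroups

/-- A pair `(A, B)` in `SL₂(𝔽)` is reducible if `A` and `B` have a common
eigenvector in `𝔽²`. -/
def HasCommonEigenvector {F : Type*} [Field F]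
    (A B : Matrix.SpecialLinearGroup (Fin 2) F) : Prop :=
  ∃ v : Fin 2 → F, v ≠ 0 ∧
    (∃ a : F, (A : Matrix (Fin 2) (Fin 2) F) *ᵥ v = a • v) ∧
    (∃ b : F, (B : Matrix (Fin 2) (Fin 2) F) *ᵥ v = b • v)

lemma exists_mulVec_eq_smul {F : Type*} [Field F] [IsAlgClosed F]
    (M : Matrix (Fin 2) (Fin 2) F) : ∃ v : Fin 2 → F, v ≠ 0 ∧ ∃ y : F, M *ᵥ v = y • v := by
  obtain ⟨y, hy⟩ := Module.End.exists_eigenvalue (Matrix.toLin' M)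
  obtain ⟨v, hv⟩ := hy.exists_hasEigenvector
  exact ⟨v, hv.2, y, by simpa using hv.apply_eq_smul⟩

lemma exists_eq_smul_of_cross_eq_zero {F : Type*} [Field F] {v w : Fin 2 → F} (hv : v ≠ 0)
    (h : v 0 * w 1 - w 0 * v 1 = 0) : ∃ a : F, w = a • v := by
  by_cases h0 : v 0 = 0
  · have h1 : v 1 ≠ 0 := by
      intro h1
      apply hv
      ext i
      fin_cases i <;> simp [h0, h1]
    have hw : w 0 = 0 := by simpa [h0, h1] using h
    refine ⟨w 1 / v 1, ?_⟩
    ext i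
    fin_cases i
    · simp [h0, hw]
    · simp [h1]
  · refine ⟨w 0 / v 0, ?_⟩
    ext i
    fin_cases i
    · simp [h0]
    · simp
      field_simp
      linear_combination h

/-- A matrix is determined by its values on the columns of an invertible `Q`: if `M Q = Q N`, then
`Q⁻¹ M Q = N`. -/
lemma conj_eq_of_mul_eq {F : Type*} [Field F] (Q : GL (Fin 2) F) {M N : Matrix (Fin 2) (Fin 2) F}
    (h : M * (Q : Matrix (Fin 2) (Fin 2) F) = Q * N) :
    ((Q⁻¹ : GL (Fin 2) F) : Matrix (Fin 2) (Fin 2) F) * M *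
      (((Q⁻¹)⁻¹ : GL (Fin 2) F) : Matrix (Fin 2) (Fin 2) F) = N := by
  rw [inv_inv, mul_assoc, h, ← mul_assoc, Units.inv_mul, one_mul]

theorem irreducible_klein_pair_conjugate_normal_form
    {F : Type*} [Field F] [IsAlgClosed F]
    (A B : Matrix.SpecialLinearGroup (Fin 2) F)
    (hrel : A * B * A⁻¹ * B = 1)
    (hirr : ¬ HasCommonEigenvector A B) :
    ∃ (P : GL (Fin 2) F) (y : F), y ≠ 0 ∧
      (P : Matrix (Fin 2) (Fin 2) F) * (A : Matrix (Fin 2) (Fin 2) F) *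
        ((P⁻¹ : GL (Fin 2) F) : Matrix (Fin 2) (Fin 2) F) = !![0, -1; 1, 0] ∧
      (P : Matrix (Fin 2) (Fin 2) F) * (B : Matrix (Fin 2) (Fin 2) F) *
        ((P⁻¹ : GL (Fin 2) F) : Matrix (Fin 2) (Fin 2) F) = !![y, 0; 0, y⁻¹] := by
  have hBAB : B * A * B = A := by
    have h1 : A * B * A⁻¹ = B⁻¹ := eq_inv_of_mul_eq_one_left hrel
    have h2 : A * B = B⁻¹ * A := by rw [← h1]; group
    rw [mul_assoc, h2]; group
  have hM : (B : Matrix (Fin 2) (Fin 2) F) * A * B = A := by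
    have := congrArg (fun M : Matrix.SpecialLinearGroup (Fin 2) F =>
      (M : Matrix (Fin 2) (Fin 2) F)) hBAB
    simpa using this
  have hdA := A.det_coe
  have hdB := B.det_coe
  unfold HasCommonEigenvector at hirr
  generalize (A : Matrix (Fin 2) (Fin 2) F) = M at *
  generalize (B : Matrix (Fin 2) (Fin 2) F) = N at *
  obtain ⟨v, hv, y, hy⟩ := exists_mulVec_eq_smul N
  have hy0 : y ≠ 0 := by
    rintro rfl
    rw [zero_smul] at hy
    have := Matrix.exists_mulVec_eq_zero_iff.1 ⟨v, hv, hy⟩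
    rw [hdB] at this
    exact one_ne_zero this
  obtain ⟨w, hw⟩ : ∃ w, M *ᵥ v = w := ⟨_, rfl⟩
  have hNw : y • N *ᵥ w = w := by
    rw [← hw]
    conv_rhs => rw [← hM]
    rw [← Matrix.mulVec_mulVec, hy, Matrix.mulVec_smul, Matrix.mulVec_mulVec]
  have hNw' : N *ᵥ w = y⁻¹ • w := by
    conv_rhs => rw [← hNw]
    rw [smul_smul, inv_mul_cancel₀ hy0, one_smul]
  have hdet : v 0 * w 1 - w 0 * v 1 ≠ 0 := by
    intro h
    obtain ⟨a, ha⟩ := exists_eq_smul_of_cross_eq_zero hv h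
    exact hirr ⟨v, hv, ⟨a, hw.trans ha⟩, y, hy⟩
  have hw0 : w ≠ 0 := by
    rintro rfl
    simp at hdet
  -- Cayley–Hamilton for `M`, whose determinant is `1`
  have hMw : M *ᵥ w = M.trace • w - v := by
    rw [Matrix.det_fin_two] at hdA
    rw [← hw]
    ext i
    fin_cases i
    · simp [Matrix.mulVec, dotProduct, Fin.sum_univ_two, Matrix.trace]
      linear_combination -v 0 * hdA
    · simp [Matrix.mulVec, dotProduct, Fin.sum_univ_two, Matrix.trace]
      linear_combination -v 1 * hdA
  have hNMw : N *ᵥ (M *ᵥ w) = y • (M *ᵥ w) := by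
    have : N *ᵥ (M *ᵥ (N *ᵥ w)) = M *ᵥ w := by
      rw [Matrix.mulVec_mulVec, Matrix.mulVec_mulVec, hM]
    rw [hNw', Matrix.mulVec_smul, Matrix.mulVec_smul] at this
    rw [← this, smul_smul, mul_inv_cancel₀ hy0, one_smul, this]
  have htr : M.trace * (y⁻¹ - y) = 0 := by
    rw [hMw, Matrix.mulVec_sub, Matrix.mulVec_smul, hNw', hy] at hNMw
    have : (M.trace * (y⁻¹ - y)) • w = 0 := by
      ext i
      have := congrFun hNMw i
      simp only [Pi.sub_apply, Pi.smul_apply, smul_eq_mul, Pi.zero_apply] at this ⊢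
      linear_combination this
    exact (smul_eq_zero.1 this).resolve_right hw0
  let Q : GL (Fin 2) F := Matrix.GeneralLinearGroup.mkOfDetNeZero !![v 0, w 0; v 1, w 1]
    (by rwa [Matrix.det_fin_two_of])
  have hQ : (Q : Matrix (Fin 2) (Fin 2) F) = !![v 0, w 0; v 1, w 1] := rfl
  have mul_cols (X : Matrix (Fin 2) (Fin 2) F) :
      X * (Q : Matrix (Fin 2) (Fin 2) F) =
        !![(X *ᵥ v) 0, (X *ᵥ w) 0; (X *ᵥ v) 1, (X *ᵥ w) 1] := by
    rw [hQ]
    ext i j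
    fin_cases i <;> fin_cases j <;>
      simp [Matrix.mul_apply, Matrix.mulVec, dotProduct, Fin.sum_univ_two]
  have hNQ : N * (Q : Matrix (Fin 2) (Fin 2) F) =
      (Q : Matrix (Fin 2) (Fin 2) F) * !![y, 0; 0, y⁻¹] := by
    rw [mul_cols, hy, hNw', hQ]
    simp [mul_comm]
  have htr0 : M.trace = 0 := by
    refine (mul_eq_zero.1 htr).resolve_right fun hyy => ?_
    -- `N` acts on the basis `(v, w)` as the scalar `y`
    have hN : N = y • (1 : Matrix (Fin 2) (Fin 2) F) := by
      rw [← Units.mul_left_inj Q, hNQ, sub_eq_zero.1 hyy, hQ]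
      simp [mul_comm]
    obtain ⟨u, hu, a, ha⟩ := exists_mulVec_eq_smul M
    exact hirr ⟨u, hu, ⟨a, ha⟩, y, by rw [hN, Matrix.smul_mulVec, Matrix.one_mulVec]⟩
  have hMQ : M * (Q : Matrix (Fin 2) (Fin 2) F) =
      (Q : Matrix (Fin 2) (Fin 2) F) * !![0, -1; 1, 0] := by
    rw [mul_cols, hMw, hw, htr0, hQ]
    simp
  exact ⟨Q⁻¹, y, hy0, conj_eq_of_mul_eq Q hMQ, conj_eq_of_mul_eq Q hNQ⟩
end

section
/- Let 𝔽 be an algebraically closed field, y ∈ 𝔽 nonzero, and set A = [[0,-1],[1,0]] and B = [[y,0],[0,y⁻¹]] in SL₂(𝔽). Then A·B·A⁻¹·B = E, the commutator satisfies tr(A·B·A⁻¹·B⁻¹) = y² + y⁻², and the pair (A,B) is reducible (has a common eigenvector) if and only if y² = 1. -/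
/-!
The relation and the trace are direct matrix computations: conjugation by `A` swaps the two
diagonal entries of `B`, so `A * B * A⁻¹ = B⁻¹` and the commutator is `B⁻¹ * B⁻¹`.

Both coordinates of an eigenvector of `A` are nonzero; if it is also an eigenvector of the diagonal
matrix `B`, then `y = y⁻¹`. Conversely `y ^ 2 = 1` makes `B` the scalar `y`, and `A` has the
eigenvector `(1, -i)` with eigenvalue `i`, where `i ^ 2 = -1`; this also holds in
characteristic two.
-/

open Matrix MatrixGroups

theorem klein_normal_form_properties
    {F : Type*} [Field F] [IsAlgClosed F]
    (y : F) (hy : y ≠ 0)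
    (A B : Matrix.SpecialLinearGroup (Fin 2) F)
    (hA : (A : Matrix (Fin 2) (Fin 2) F) = !![0, -1; 1, 0])
    (hB : (B : Matrix (Fin 2) (Fin 2) F) = !![y, 0; 0, y⁻¹]) :
    A * B * A⁻¹ * B = 1 ∧
    Matrix.trace ((A * B * A⁻¹ * B⁻¹ :
        Matrix.SpecialLinearGroup (Fin 2) F) : Matrix (Fin 2) (Fin 2) F)
      = y ^ 2 + (y ^ 2)⁻¹ ∧
    (HasCommonEigenvector A B ↔ y ^ 2 = 1) := by
  have hAi : ((A⁻¹ : Matrix.SpecialLinearGroup (Fin 2) F) : Matrix (Fin 2) (Fin 2) F)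
      = !![0, 1; -1, 0] := by
    refine (Matrix.SpecialLinearGroup.coe_inv A).trans ?_
    rw [hA, adjugate_fin_two_of]
    simp
  have hBi : ((B⁻¹ : Matrix.SpecialLinearGroup (Fin 2) F) : Matrix (Fin 2) (Fin 2) F)
      = !![y⁻¹, 0; 0, y] := by
    refine (Matrix.SpecialLinearGroup.coe_inv B).trans ?_
    rw [hB, adjugate_fin_two_of]
    simp
  refine ⟨?_, ?_, ?_, ?_⟩
  · apply Subtype.ext
    change A.1 * B.1 * (A⁻¹).1 * B.1 = 1
    rw [hA, hB, hAi]
    simp [hy, one_fin_two]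
  · change trace (A.1 * B.1 * (A⁻¹).1 * (B⁻¹).1) = _
    rw [hA, hB, hAi, hBi]
    simp [trace_fin_two]
    ring
  · rintro ⟨v, hv, ⟨a, ha⟩, ⟨b, hb⟩⟩
    rw [hA] at ha
    rw [hB] at hb
    have ha0 : -v 1 = a * v 0 := by simpa [mulVec, dotProduct] using congrFun ha 0
    have ha1 : v 0 = a * v 1 := by simpa [mulVec, dotProduct] using congrFun ha 1
    have hb0 : y * v 0 = b * v 0 := by
      simpa only [mulVec, dotProduct, Fin.sum_univ_two, of_apply, cons_val_zero, cons_val_one,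
        cons_val', cons_val_fin_one, zero_mul, add_zero, Pi.smul_apply, smul_eq_mul]
        using congrFun hb 0
    have hb1 : y⁻¹ * v 1 = b * v 1 := by
      simpa only [mulVec, dotProduct, Fin.sum_univ_two, of_apply, cons_val_zero, cons_val_one,
        cons_val', cons_val_fin_one, zero_mul, zero_add, Pi.smul_apply, smul_eq_mul]
        using congrFun hb 1
    -- `A` swaps the coordinate axes, so an eigenvector of `A` lies on neither of them.
    have h1 : v 1 ≠ 0 := by
      intro h
      have h0 : v 0 = 0 := by rw [ha1, h, mul_zero]
      exact hv (by ext i; fin_cases i <;> simp [h0, h])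
    have h0 : v 0 ≠ 0 := by
      intro h
      rw [h, mul_zero, neg_eq_zero] at ha0
      exact h1 ha0
    have e : y = y⁻¹ := (mul_right_cancel₀ h0 hb0).trans (mul_right_cancel₀ h1 hb1).symm
    calc y ^ 2 = y * y := sq y
      _ = y * y⁻¹ := by rw [← e]
      _ = 1 := mul_inv_cancel₀ hy
  · intro h
    have e : y⁻¹ = y := inv_eq_of_mul_eq_one_left (by rw [← sq, h])
    obtain ⟨i, hi⟩ := IsAlgClosed.exists_pow_nat_eq (-1 : F) (n := 2) (by norm_num)
    refine ⟨![1, -i], fun h' => one_ne_zero (congrFun h' 0), ⟨i, ?_⟩, ⟨y, ?_⟩⟩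
    · rw [hA]
      ext j
      fin_cases j
      · simp
      · simp [← sq, hi]
    · rw [hB, e]
      ext j
      fin_cases j <;> simp [mul_comm]
end

section
/- Let 𝔽 be an algebraically closed field and let A, B ∈ SL₂(𝔽) satisfy A·B·A⁻¹·B = E. If the pair (A,B) is reducible (has a common eigenvector), then either tr(B) = 2 and tr(A·B) = tr(A), or tr(B) = -2 and tr(A·B) = -tr(A); moreover, if in addition B ≠ E and B ≠ -E, then A² = -E. -/
/-!
Let `v` be a common eigenvector, `A v = a v` and `B v = b v`. The relation says `B A B = A`;
applied to `v` it gives `a b² = a`, hence `b² = 1`. An eigenvalue `m` of a matrix `M` in `SL₂`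
satisfies `m² - tr(M) m + 1 = 0` (`trc_eigenvalue`). Applied to `B` this gives `tr B = 2b`, and
comparing the equations for `A` (at `a`) and `A B` (at `a b`) gives `tr(A B) = b tr A`.

For the second part, Cayley-Hamilton gives `B⁻¹ = 2b - B`, so that `A B = B⁻¹ A` becomes
`A B + B A = 2b A`. The polarized Cayley-Hamilton identity
`A B + B A = tr(A) B + tr(B) A + (tr(A B) - tr(A) tr(B))` (`polarized_cayley_hamilton`) then
reduces to `tr(A) (B - b) = 0`. As `B ≠ ±1`, this forces `tr A = 0`, that is `A² = -1`.
None of these steps divides by `2`, so the characteristic of the field plays no role.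
-/

open Matrix MatrixGroups

theorem sq_eq_trace_smul_sub_det {R : Type*} [CommRing R] (M : Matrix (Fin 2) (Fin 2) R) :
    M * M = M.trace • M - M.det • 1 := by
  ext i j
  fin_cases i <;> fin_cases j <;>
    simp [Matrix.mul_apply, Matrix.trace_fin_two, Matrix.det_fin_two] <;> ring

/-- The polarization of the Cayley-Hamilton identity `M² = tr(M) M - det(M)`. -/
theorem polarized_cayley_hamilton {R : Type*} [CommRing R] (M N : Matrix (Fin 2) (Fin 2) R) :
    M * N + N * M =
      M.trace • N + N.trace • M + ((M * N).trace - M.trace * N.trace) • 1 := by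
  ext i j
  fin_cases i <;> fin_cases j <;>
    simp [Matrix.mul_apply, Matrix.trace_fin_two] <;> ring

/-- An eigenvalue of a matrix in `SL₂` is a root of its characteristic polynomial
`X² - tr(M) X + 1`; in particular it is nonzero. -/
theorem trc_eigenvalue {F : Type*} [Field F] (M : Matrix.SpecialLinearGroup (Fin 2) F)
    {v : Fin 2 → F} (hv : v ≠ 0) {m : F}
    (hm : (M : Matrix (Fin 2) (Fin 2) F) *ᵥ v = m • v) :
    m ^ 2 - trc M * m + 1 = 0 := by
  have h := congrArg (· *ᵥ v) (sq_eq_trace_smul_sub_det (M : Matrix (Fin 2) (Fin 2) F))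
  simp only [← Matrix.mulVec_mulVec, Matrix.sub_mulVec, Matrix.smul_mulVec, hm,
    Matrix.mulVec_smul, M.det_coe, Matrix.one_mulVec] at h
  have h2 : (m ^ 2 - trc M * m + 1) • v = 0 := by
    rw [← sub_eq_zero] at h
    rw [← h, trc]
    module
  exact (smul_eq_zero.mp h2).resolve_right hv

theorem reducible_klein_pair_traces
    {F : Type*} [Field F] [IsAlgClosed F]
    (A B : Matrix.SpecialLinearGroup (Fin 2) F)
    (hrel : A * B * A⁻¹ * B = 1)
    (hred : HasCommonEigenvector A B) :
    ((trc B = 2 ∧ trc (A * B) = trc A) ∨ (trc B = -2 ∧ trc (A * B) = -trc A)) ∧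
    (((B : Matrix (Fin 2) (Fin 2) F) ≠ 1 ∧ (B : Matrix (Fin 2) (Fin 2) F) ≠ -1) →
      ((A * A : Matrix.SpecialLinearGroup (Fin 2) F) :
        Matrix (Fin 2) (Fin 2) F) = -1) := by
  obtain ⟨v, hv, ⟨a, ha⟩, b, hb⟩ := hred
  have hBAB : B * A * B = A := by
    have h : A * B * A⁻¹ = B⁻¹ := eq_inv_of_mul_eq_one_left hrel
    rw [mul_assoc, mul_inv_eq_iff_eq_mul.mp h, mul_inv_cancel_left]
  have hab : ((A * B : Matrix.SpecialLinearGroup (Fin 2) F) :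
      Matrix (Fin 2) (Fin 2) F) *ᵥ v = (a * b) • v := by
    rw [Matrix.SpecialLinearGroup.coe_mul, ← Matrix.mulVec_mulVec, hb, Matrix.mulVec_smul, ha,
      smul_smul, mul_comm]
  have eA := trc_eigenvalue A hv ha
  have eB := trc_eigenvalue B hv hb
  have eAB := trc_eigenvalue (A * B) hv hab
  have ha0 : a ≠ 0 := by rintro rfl; simp at eA
  have hb2 : b ^ 2 = 1 := by
    have h := congrArg (fun M : Matrix.SpecialLinearGroup (Fin 2) F =>
      (M : Matrix (Fin 2) (Fin 2) F) *ᵥ v) hBAB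
    simp only [mul_assoc] at h
    rw [Matrix.SpecialLinearGroup.coe_mul, ← Matrix.mulVec_mulVec, hab, Matrix.mulVec_smul, hb,
      ha, smul_smul] at h
    have h' := smul_left_injective F hv h
    apply mul_left_cancel₀ ha0
    linear_combination h'
  have htB : trc B = 2 * b := by
    linear_combination (b - trc B) * hb2 - b * eB
  have htAB : trc (A * B) = b * trc A := by
    apply mul_left_cancel₀ ha0
    linear_combination (a ^ 2 * b - a * trc (A * B)) * hb2 + b * eA - b * eAB
  have hb1 : b = 1 ∨ b = -1 := by simpa using hb2
  refine ⟨?_, fun ⟨hB1, hB2⟩ => ?_⟩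
  · rcases hb1 with rfl | rfl
    · left; constructor <;> simp [htB, htAB]
    · right; constructor <;> simp [htB, htAB]
  have hAnti : (A : Matrix (Fin 2) (Fin 2) F) * (B : Matrix (Fin 2) (Fin 2) F)
      + (B : Matrix (Fin 2) (Fin 2) F) * (A : Matrix (Fin 2) (Fin 2) F)
      = (2 * b) • (A : Matrix (Fin 2) (Fin 2) F) := by
    have hCH := sq_eq_trace_smul_sub_det (B : Matrix (Fin 2) (Fin 2) F)
    have hM : (B : Matrix (Fin 2) (Fin 2) F) * (A * B) = A := by
      rw [← mul_assoc]
      exact congrArg Subtype.val hBAB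
    -- Cayley-Hamilton for `B` exhibits `2b - B` as the inverse of `B`.
    have hinv : ((2 * b) • 1 - (B : Matrix (Fin 2) (Fin 2) F)) * B = 1 := by
      rw [sub_mul, hCH, ← htB, trc, B.det_coe]
      simp
    have h : (A : Matrix (Fin 2) (Fin 2) F) * B
        = ((2 * b) • 1 - (B : Matrix (Fin 2) (Fin 2) F)) * A := by
      conv_rhs => rw [← hM, ← mul_assoc, hinv, one_mul]
    rw [h, sub_mul]
    simp
  have hpol := polarized_cayley_hamilton (A : Matrix (Fin 2) (Fin 2) F) B
  have key : trc A • ((B : Matrix (Fin 2) (Fin 2) F) - b • 1) = 0 := by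
    have e : (A : Matrix (Fin 2) (Fin 2) F).trace = trc A := rfl
    have e' : (B : Matrix (Fin 2) (Fin 2) F).trace = 2 * b := htB
    have e'' : ((A : Matrix (Fin 2) (Fin 2) F) * B).trace = b * trc A := htAB
    rw [hAnti, e, e', e'', ← sub_eq_zero] at hpol
    rw [← neg_eq_zero, ← hpol]
    module
  have hNe : (B : Matrix (Fin 2) (Fin 2) F) - b • 1 ≠ 0 := by
    intro h
    rcases hb1 with rfl | rfl
    · exact hB1 (by simpa [sub_eq_zero] using h)
    · exact hB2 (by simpa using eq_neg_of_add_eq_zero_left (by simpa using h))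
  have hA0 : trc A = 0 := (smul_eq_zero.mp key).resolve_right hNe
  rw [Matrix.SpecialLinearGroup.coe_mul, sq_eq_trace_smul_sub_det,
    show (A : Matrix (Fin 2) (Fin 2) F).trace = 0 from hA0, A.det_coe]
  simp
end

section
/- Let 𝔽 be a field of characteristic 2. For u ∈ 𝔽 set A_u = [[1,u],[0,1]] and B = [[1,1],[0,1]] in SL₂(𝔽). Then for u, u' ∈ 𝔽, the pairs (A_u, B) and (A_{u'}, B) are conjugate in SL₂(𝔽) (i.e. there exists P ∈ SL₂(𝔽) with P·A_u·P⁻¹ = A_{u'} and P·B·P⁻¹ = B) if and only if u = u'. In particular, for distinct u these pairs give pairwise non-conjugate representations of the Klein bottle group. -/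
open Matrix MatrixGroups

theorem char_two_unipotent_pairs_conjugate_iff_eq
    {F : Type*} [Field F] [CharP F 2]
    (u u' : F)
    (A A' B : Matrix.SpecialLinearGroup (Fin 2) F)
    (hA : (A : Matrix (Fin 2) (Fin 2) F) = !![1, u; 0, 1])
    (hA' : (A' : Matrix (Fin 2) (Fin 2) F) = !![1, u'; 0, 1])
    (hB : (B : Matrix (Fin 2) (Fin 2) F) = !![1, 1; 0, 1]) :
    (∃ P : Matrix.SpecialLinearGroup (Fin 2) F,
        P * A * P⁻¹ = A' ∧ P * B * P⁻¹ = B) ↔ u = u' := by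
  constructor
  · rintro ⟨P, h1, h2⟩
    rw [mul_inv_eq_iff_eq_mul] at h1 h2
    have h1' := congrArg (fun M : Matrix.SpecialLinearGroup (Fin 2) F =>
      (M : Matrix (Fin 2) (Fin 2) F)) h1
    have h2' := congrArg (fun M : Matrix.SpecialLinearGroup (Fin 2) F =>
      (M : Matrix (Fin 2) (Fin 2) F)) h2
    simp only [Matrix.SpecialLinearGroup.coe_mul, hA, hA', hB] at h1' h2'
    have hdet := P.det_coe
    rw [Matrix.det_fin_two] at hdet
    -- Commuting with `B` forces `P` to be upper triangular with equal diagonal entries.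
    have e00 := congrFun (congrFun h2' 0) 0
    have e01 := congrFun (congrFun h2' 0) 1
    have f01 := congrFun (congrFun h1' 0) 1
    simp [Matrix.mul_apply, Fin.sum_univ_two] at e00 e01 f01
    -- The `(0, 1)` entry of `P * A = A' * P` then reads `P 0 0 * u = P 0 0 * u'`.
    grind
  · rintro rfl
    have hAA' : A = A' := Subtype.ext (hA.trans hA'.symm)
    exact ⟨1, by simp [hAA'], by simp⟩
end

section
/- Let 𝔽 be an algebraically closed field and let G, H ∈ SL₂(𝔽) satisfy the braid relation G·H·G = H·G·H. If the pair (G,H) is irreducible (has no common eigenvector), then there exist an invertible 2×2 matrix P over 𝔽 and a nonzero x ∈ 𝔽 such that P·G·P⁻¹ = [[x,1],[0,x⁻¹]] and P·H·P⁻¹ = [[x⁻¹,0],[-1,x]]. -/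
/-!
Over an algebraically closed field `G` has an eigenvector `u`, with eigenvalue `x`. By
irreducibility `u` is not an eigenvector of `H`, so `u` and `x⁻¹ u - H u` form a basis. In this basis
`G` and `H` become `[[x, g], [0, y]]` and `[[x⁻¹, b], [-1, d]]`. The determinants give `x y = 1` and
`x⁻¹ d + b = 1`; the first column of the braid relation then forces `g = 1`, `b = 0`, `d = x`.
-/

open Matrix MatrixGroups

/-- The matrix computation behind the normal form: the first columns of `A` and `B`, the
determinants and the braid relation determine the remaining entries. -/
lemma braid_pair_entries {F : Type*} [Field F] {A B : Matrix (Fin 2) (Fin 2) F} {x : F}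
    (hA : A.det = 1) (hB : B.det = 1) (hrel : A * B * A = B * A * B)
    (hA0 : A 0 0 = x) (hA1 : A 1 0 = 0) (hB0 : B 0 0 = x⁻¹) (hB1 : B 1 0 = -1) :
    x ≠ 0 ∧ A = !![x, 1; 0, x⁻¹] ∧ B = !![x⁻¹, 0; -1, x] := by
  have e00 := congrFun (congrFun hrel 0) 0
  have e10 := congrFun (congrFun hrel 1) 0
  simp only [Matrix.mul_apply, Fin.sum_univ_two, hA0, hA1, hB0, hB1] at e00 e10
  rw [Matrix.det_fin_two, hA0, hA1] at hA
  rw [Matrix.det_fin_two, hB0, hB1] at hB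
  have hx : x ≠ 0 := by
    rintro rfl
    simp at hA
  have hxi : x * x⁻¹ = 1 := mul_inv_cancel₀ hx
  have hy : A 1 1 = x⁻¹ := eq_inv_of_mul_eq_one_right (by linear_combination hA)
  rw [hy] at e00 e10
  have hg : A 0 1 = x⁻¹ * B 1 1 := by linear_combination -e10
  have hb : B 0 1 = 1 - A 0 1 := by linear_combination hB + hg
  have hg1 : A 0 1 = 1 := by
    have : x * (1 - A 0 1) = 0 := by
      linear_combination e00 - x⁻¹ * hb - x * hxi + x⁻¹ * hxi
    rcases mul_eq_zero.1 this with h | h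
    · exact absurd h hx
    · linear_combination -h
  have hd : B 1 1 = x := by linear_combination (-B 1 1) * hxi - x * hg + x * hg1
  refine ⟨hx, ?_, ?_⟩
  · ext i j
    fin_cases i <;> fin_cases j <;> simp [hA0, hA1, hg1, hy]
  · ext i j
    fin_cases i <;> fin_cases j <;> simp [hB0, hB1, hb, hg1, hd]

theorem irreducible_braid_pair_conjugate_normal_form
    {F : Type*} [Field F] [IsAlgClosed F]
    (G H : Matrix.SpecialLinearGroup (Fin 2) F)
    (hrel : G * H * G = H * G * H)
    (hirr : ¬ HasCommonEigenvector G H) :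
    ∃ (P : GL (Fin 2) F) (x : F), x ≠ 0 ∧
      (P : Matrix (Fin 2) (Fin 2) F) * (G : Matrix (Fin 2) (Fin 2) F) *
        ((P⁻¹ : GL (Fin 2) F) : Matrix (Fin 2) (Fin 2) F) = !![x, 1; 0, x⁻¹] ∧
      (P : Matrix (Fin 2) (Fin 2) F) * (H : Matrix (Fin 2) (Fin 2) F) *
        ((P⁻¹ : GL (Fin 2) F) : Matrix (Fin 2) (Fin 2) F) = !![x⁻¹, 0; -1, x] := by
  obtain ⟨x, hx⟩ := Module.End.exists_eigenvalue (Matrix.toLin' (G : Matrix (Fin 2) (Fin 2) F))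
  obtain ⟨u, hu⟩ := hx.exists_hasEigenvector
  have hGu : (G : Matrix (Fin 2) (Fin 2) F) *ᵥ u = x • u := by
    simpa using hu.apply_eq_smul
  set w : Fin 2 → F := x⁻¹ • u - (H : Matrix (Fin 2) (Fin 2) F) *ᵥ u with hw
  have hHu : (H : Matrix (Fin 2) (Fin 2) F) *ᵥ u = x⁻¹ • u - w := by rw [hw]; abel
  have hli : LinearIndependent F ![u, w] := by
    rw [LinearIndependent.pair_iff' hu.2]
    intro a ha
    refine hirr ⟨u, hu.2, ⟨x, hGu⟩, x⁻¹ - a, ?_⟩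
    rw [hHu, ← ha, sub_smul]
  -- The columns of `Q` are `u` and `w`.
  let Q : Matrix (Fin 2) (Fin 2) F := (Matrix.of ![u, w])ᵀ
  have hQ : IsUnit Q := by
    rw [← Matrix.linearIndependent_cols_iff_isUnit]
    exact hli
  obtain ⟨R, hR⟩ := hQ
  have hu' : Q *ᵥ ![1, 0] = u := by
    ext i; fin_cases i <;> simp [Q, Matrix.mulVec, dotProduct]
  have hw' : Q *ᵥ ![0, 1] = w := by
    ext i; fin_cases i <;> simp [Q, Matrix.mulVec, dotProduct]
  have hinv : ∀ v : Fin 2 → F, (↑R⁻¹ : Matrix (Fin 2) (Fin 2) F) *ᵥ (Q *ᵥ v) = v := by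
    intro v
    rw [← hR, Matrix.mulVec_mulVec, Units.inv_mul, Matrix.one_mulVec]
  have hRu : (↑R⁻¹ : Matrix (Fin 2) (Fin 2) F) *ᵥ u = ![1, 0] := by rw [← hu', hinv]
  have hRw : (↑R⁻¹ : Matrix (Fin 2) (Fin 2) F) *ᵥ w = ![0, 1] := by rw [← hw', hinv]
  have hcol : ∀ (M : Matrix (Fin 2) (Fin 2) F) (i : Fin 2), M i 0 = (M *ᵥ ![1, 0]) i := by
    intro M i
    simp [Matrix.mulVec, dotProduct]
  have hA : ((↑R⁻¹ : Matrix (Fin 2) (Fin 2) F) * (G : Matrix (Fin 2) (Fin 2) F) * (↑R : Matrix (Fin 2) (Fin 2) F)) *ᵥ ![1, 0]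
      = ![x, 0] := by
    rw [← Matrix.mulVec_mulVec, ← Matrix.mulVec_mulVec, hR, hu', hGu, Matrix.mulVec_smul, hRu]
    simp
  have hB : ((↑R⁻¹ : Matrix (Fin 2) (Fin 2) F) * (H : Matrix (Fin 2) (Fin 2) F) * (↑R : Matrix (Fin 2) (Fin 2) F)) *ᵥ ![1, 0]
      = ![x⁻¹, -1] := by
    rw [← Matrix.mulVec_mulVec, ← Matrix.mulVec_mulVec, hR, hu', hHu, Matrix.mulVec_sub,
      Matrix.mulVec_smul, hRu, hRw]
    simp
  have hrel' : (G : Matrix (Fin 2) (Fin 2) F) * H * G = H * G * H := by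
    simpa using congrArg (fun M : Matrix.SpecialLinearGroup (Fin 2) F =>
      (M : Matrix (Fin 2) (Fin 2) F)) hrel
  refine ⟨R⁻¹, x, ?_⟩
  rw [inv_inv]
  refine braid_pair_entries ?_ ?_ ?_ ?_ ?_ ?_ ?_
  · rw [Matrix.det_units_conj']
    exact G.2
  · rw [Matrix.det_units_conj']
    exact H.2
  · have := congrArg (fun M => (↑R⁻¹ : Matrix (Fin 2) (Fin 2) F) * M *
      (↑R : Matrix (Fin 2) (Fin 2) F)) hrel'
    simpa only [mul_assoc, Units.mul_inv_cancel_left] using this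
  · exact (hcol _ 0).trans (congrFun hA 0)
  · exact (hcol _ 1).trans (congrFun hA 1)
  · exact (hcol _ 0).trans (congrFun hB 0)
  · exact (hcol _ 1).trans (congrFun hB 1)
end

section
/- Let 𝔽 be an algebraically closed field, x ∈ 𝔽 nonzero, and set G = [[x,1],[0,x⁻¹]] and H = [[x⁻¹,0],[-1,x]] in SL₂(𝔽). Then G·H·G = H·G·H, the commutator satisfies tr(G·H·G⁻¹·H⁻¹) = x² + 1 + x⁻², and the pair (G,H) is reducible (has a common eigenvector) if and only if x² + x⁻² = 1. -/
/-!
The braid relation and the trace are direct matrix computations. For reducibility, a common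
eigenvector `(p, q)` has `p, q ≠ 0`: the off-diagonal entry of `H` shows that `(1, 0)` is not an
eigenvector of `H`, and that of `G` shows that `(0, 1)` is not an eigenvector of `G`. Hence both
eigenvalues are `x⁻¹`, and the conditions become `q = (x⁻¹ - x) p` and `p = (x - x⁻¹) q`. These are
compatible exactly when `-(x - x⁻¹)² = 1`, i.e. `x² + x⁻² = 1`, and then `(1, x⁻¹ - x)` is a common
eigenvector.
-/

open Matrix MatrixGroups

theorem braid_normal_form_properties
    {F : Type*} [Field F] [IsAlgClosed F]
    (x : F) (hx : x ≠ 0)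
    (G H : Matrix.SpecialLinearGroup (Fin 2) F)
    (hG : (G : Matrix (Fin 2) (Fin 2) F) = !![x, 1; 0, x⁻¹])
    (hH : (H : Matrix (Fin 2) (Fin 2) F) = !![x⁻¹, 0; -1, x]) :
    G * H * G = H * G * H ∧
    Matrix.trace ((G * H * G⁻¹ * H⁻¹ :
        Matrix.SpecialLinearGroup (Fin 2) F) : Matrix (Fin 2) (Fin 2) F)
      = x ^ 2 + 1 + (x ^ 2)⁻¹ ∧
    (HasCommonEigenvector G H ↔ x ^ 2 + (x ^ 2)⁻¹ = 1) := by
  have hxy : x * x⁻¹ = 1 := mul_inv_cancel₀ hx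
  rw [← inv_pow]
  generalize x⁻¹ = y at *
  refine ⟨?_, ?_, ?_⟩
  · apply Subtype.ext
    change G.val * H.val * G.val = H.val * G.val * H.val
    rw [hG, hH]
    ext i j
    fin_cases i <;> fin_cases j <;> simp [Matrix.mul_apply, Fin.sum_univ_two] <;> grind
  · change trace (G.val * H.val * adjugate G.val * adjugate H.val) = _
    rw [hG, hH, adjugate_fin_two_of, adjugate_fin_two_of, trace_fin_two]
    simp [Matrix.mul_apply, Fin.sum_univ_two]
    grind
  · simp only [HasCommonEigenvector, hG, hH]
    constructor
    · rintro ⟨v, hv, ⟨a, ha⟩, ⟨b, hb⟩⟩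
      have a0 := congrFun ha 0
      have a1 := congrFun ha 1
      have b0 := congrFun hb 0
      have b1 := congrFun hb 1
      simp [mulVec, dotProduct, Fin.sum_univ_two] at a0 a1 b0 b1
      have hq : v 1 ≠ 0 := by
        intro h
        apply hv
        ext i
        fin_cases i <;> simp_all
      have hp : v 0 ≠ 0 := by
        intro h
        simp_all
      have hay : y = a := by grind
      have hby : y = b := by grind
      subst hay hby
      have h1 : v 1 = (y - x) * v 0 := by linear_combination a0
      have h2 : v 0 = (x - y) * v 1 := by linear_combination -b1
      have h3 : v 0 * (x ^ 2 + y ^ 2 - 1) = 0 := by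
        linear_combination h2 + (x - y) * h1 + 2 * v 0 * hxy
      linear_combination (mul_eq_zero.mp h3).resolve_left hp
    · intro h
      refine ⟨![1, y - x], fun h0 => one_ne_zero (congrFun h0 0), ⟨y, ?_⟩, ⟨y, ?_⟩⟩
      · ext i
        fin_cases i <;> simp [mulVec, dotProduct, Fin.sum_univ_two]
      · ext i
        fin_cases i <;> simp [mulVec, dotProduct, Fin.sum_univ_two]
        linear_combination 2 * hxy - h
end

section
/- Let 𝔽 be a field, x ∈ 𝔽 nonzero, set G = [[x,1],[0,x⁻¹]] and H = [[x⁻¹,0],[-1,x]] in SL₂(𝔽), and let s = x + x⁻¹ (so s = tr(G)). Then tr(G⁻⁴·H·G²·H) = -(x⁶ + x⁻⁶) = -s⁶ + 6s⁴ - 9s² + 2. -/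
open Matrix MatrixGroups

/-! Since `G` is upper triangular and `H * G ^ 2 * H` happens to be upper triangular as well, with
diagonal `-x⁻², -x²`, the trace is read off the product of the diagonals, the diagonal of `G⁻⁴`
being `x⁻⁴, x⁴`. The second equality is the Chebyshev-type identity writing `x⁶ + x⁻⁶` as a
polynomial in `x + x⁻¹`. -/

theorem trace_seifert_boundary_slope
    {F : Type*} [Field F]
    (x : F) (hx : x ≠ 0)
    (G H : Matrix.SpecialLinearGroup (Fin 2) F)
    (hG : (G : Matrix (Fin 2) (Fin 2) F) = !![x, 1; 0, x⁻¹])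
    (hH : (H : Matrix (Fin 2) (Fin 2) F) = !![x⁻¹, 0; -1, x])
    (s : F) (hs : s = x + x⁻¹) :
    Matrix.trace ((G ^ (-4 : ℤ) * H * G ^ 2 * H :
        Matrix.SpecialLinearGroup (Fin 2) F) : Matrix (Fin 2) (Fin 2) F)
      = -(x ^ 6 + (x ^ 6)⁻¹) ∧
    -(x ^ 6 + (x ^ 6)⁻¹) = -s ^ 6 + 6 * s ^ 4 - 9 * s ^ 2 + 2 := by
  constructor
  · have h4 : G ^ (-4 : ℤ) * H * G ^ 2 * H =
        G⁻¹ * G⁻¹ * (G⁻¹ * G⁻¹) * (H * (G * G) * H) := by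
      rw [pow_two]
      group
    have hI : ((G⁻¹ : Matrix.SpecialLinearGroup (Fin 2) F) : Matrix (Fin 2) (Fin 2) F)
        = !![x⁻¹, -1; 0, x] := by
      rw [Matrix.SpecialLinearGroup.coe_inv, hG, Matrix.adjugate_fin_two_of, neg_zero]
    have hW : (!![x⁻¹, 0; -1, x] * (!![x, 1; 0, x⁻¹] * !![x, 1; 0, x⁻¹]) * !![x⁻¹, 0; -1, x] :
        Matrix (Fin 2) (Fin 2) F) = !![-(x⁻¹) ^ 2, x + x⁻¹; 0, -x ^ 2] := by
      ext i j
      fin_cases i <;> fin_cases j <;> simp [Matrix.mul_apply, Fin.sum_univ_two] <;>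
        field_simp <;> ring
    rw [h4]
    simp only [Matrix.SpecialLinearGroup.coe_mul, hI, hG, hH, hW]
    simp [Matrix.trace_fin_two]
    field_simp
  · subst hs
    field_simp
    ring
end

section
/- Let 𝔽 be an algebraically closed field and let G, H ∈ SL₂(𝔽) satisfy the braid relation G·H·G = H·G·H. If the pair (G,H) is reducible (has a common eigenvector), then tr(G) = tr(H) and tr(G·H) = (tr G)² - 2. -/
/-!
On a common eigenvector `v`, with eigenvalues `a` for `G` and `b` for `H`, the braid relation reads
`a * b * a = b * a * b`. Both eigenvalues are nonzero since the determinants are `1`, so `a = b`.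
An element of `SL₂` with eigenvalue `c` has trace `c + c⁻¹` (`trc_eq_of_mulVec_eq`). Hence `G` and
`H` both have trace `a + a⁻¹`, while `G * H`, which scales `v` by `a * a`, has trace
`a ^ 2 + a⁻¹ ^ 2 = (a + a⁻¹) ^ 2 - 2`.
-/

open Matrix MatrixGroups

/-- An eigenvalue `a` of `M ∈ SL₂` is a root of the characteristic polynomial `X² - tr(M) X + 1`;
hence it is nonzero and the trace is `a + a⁻¹`. -/
lemma trc_eq_of_mulVec_eq {F : Type*} [Field F] (M : Matrix.SpecialLinearGroup (Fin 2) F)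
    {v : Fin 2 → F} (hv : v ≠ 0) {a : F}
    (h : (M : Matrix (Fin 2) (Fin 2) F) *ᵥ v = a • v) :
    a ≠ 0 ∧ trc M = a + a⁻¹ := by
  have hdet : ((M : Matrix (Fin 2) (Fin 2) F) - a • (1 : Matrix (Fin 2) (Fin 2) F)).det = 0 :=
    Matrix.exists_mulVec_eq_zero_iff.mp
      ⟨v, hv, by rw [Matrix.sub_mulVec, h, Matrix.smul_mulVec, Matrix.one_mulVec, sub_self]⟩
  have hM := M.det_coe
  rw [Matrix.det_fin_two] at hM hdet
  simp at hdet
  have hchar : a * (trc M - a) = 1 := by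
    rw [trc, Matrix.trace_fin_two]
    linear_combination hM - hdet
  have ha : a ≠ 0 := left_ne_zero_of_mul_eq_one hchar
  refine ⟨ha, ?_⟩
  rw [← eq_inv_of_mul_eq_one_right hchar]
  ring

theorem reducible_braid_pair_traces
    {F : Type*} [Field F] [IsAlgClosed F]
    (G H : Matrix.SpecialLinearGroup (Fin 2) F)
    (hrel : G * H * G = H * G * H)
    (hred : HasCommonEigenvector G H) :
    trc G = trc H ∧ trc (G * H) = (trc G) ^ 2 - 2 := by
  obtain ⟨v, hv, ⟨a, hG⟩, ⟨b, hH⟩⟩ := hred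
  obtain ⟨ha, htG⟩ := trc_eq_of_mulVec_eq G hv hG
  obtain ⟨hb, htH⟩ := trc_eq_of_mulVec_eq H hv hH
  have hab : a = b := by
    have h := congrArg
      (fun M : Matrix.SpecialLinearGroup (Fin 2) F => (M : Matrix (Fin 2) (Fin 2) F) *ᵥ v) hrel
    simp only [Matrix.SpecialLinearGroup.coe_mul, ← Matrix.mulVec_mulVec, hG, hH,
      Matrix.mulVec_smul, smul_smul] at h
    have h' := smul_left_injective F hv h
    have hz : (a * b) * (a - b) = 0 := by linear_combination h'
    exact sub_eq_zero.mp ((mul_eq_zero.mp hz).resolve_left (mul_ne_zero ha hb))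
  subst hab
  have hGH : ((G * H : Matrix.SpecialLinearGroup (Fin 2) F) : Matrix (Fin 2) (Fin 2) F) *ᵥ v
      = (a * a) • v := by
    rw [Matrix.SpecialLinearGroup.coe_mul, ← Matrix.mulVec_mulVec, hH, Matrix.mulVec_smul, hG,
      smul_smul]
  refine ⟨htG.trans htH.symm, ?_⟩
  rw [(trc_eq_of_mulVec_eq (G * H) hv hGH).2, htG]
  field_simp
  ring
end
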